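/- arXiv:2110.04060 — 4 statements merged into one kernel-verified Lean document; each statement's English description precedes it below -/
import Mathlib

section
/- Let Δ ∈ ℝ^{2×2} be a symmetric positive semidefinite matrix with Δ₀₀ > 0, let (x, y) be a random vector in ℝ² whose law is the centered Gaussian measure with covariance Δ, and set α = Δ₀₁ / Δ₀₀. Then for all natural numbers i, j: E[x^i y^j] = Σ_{k=0}^{j} C(j, k) · α^k · E[x^{i+k}] · E[(y − αx)^{j−k}], where C(j,k) is the binomial coefficient. -/
open MeasureTheory ProbabilityTheory Matrix

/-!
The residual `R = z₁ - α z₀` satisfies `Cov(z₀, R) = Δ₀₁ - α Δ₀₀ = 0`, and `(z₀, R)` is jointly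
Gaussian as a linear image of a Gaussian vector, so `z₀` and `R` are independent. Expanding
`z₁ ^ j = (α z₀ + R) ^ j` by the binomial theorem and integrating term by term (all moments of a
Gaussian variable are finite), each expectation `E[z₀ ^ (i + k) R ^ (j - k)]` factors.
-/

/-- The coordinates under the standard Gaussian product measure are jointly Gaussian. -/
lemma hasGaussianLaw_coords :
    HasGaussianLaw (fun (ω : Fin 2 → ℝ) (i : Fin 2) ↦ ω i)
      (Measure.pi fun _ : Fin 2 => gaussianReal 0 1) := by
  refine iIndepFun.hasGaussianLaw (X := fun i (ω : Fin 2 → ℝ) ↦ ω i) (fun i ↦ ?_)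
    (iIndepFun_pi (X := fun _ ↦ id) fun _ ↦ aemeasurable_id)
  refine HasLaw.hasGaussianLaw (μ := gaussianReal 0 1) ?_
  exact (measurePreserving_eval (fun _ : Fin 2 => gaussianReal 0 1) i).hasLaw

/-- The covariance of two linear functionals under the standard Gaussian product measure is the
dot product of their coefficient vectors. -/
lemma covariance_linear_coords (a b : Fin 2 → ℝ) :
    cov[fun ω : Fin 2 → ℝ ↦ ∑ i, a i * ω i, fun ω : Fin 2 → ℝ ↦ ∑ i, b i * ω i;
      Measure.pi fun _ : Fin 2 => gaussianReal 0 1] = ∑ i, a i * b i := by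
  have hm (i : Fin 2) : MemLp (fun ω : Fin 2 → ℝ ↦ ω i) 2
      (Measure.pi fun _ : Fin 2 => gaussianReal 0 1) :=
    (hasGaussianLaw_coords.eval i).memLp_two
  have hvar (i : Fin 2) : cov[fun ω : Fin 2 → ℝ ↦ ω i, fun ω : Fin 2 → ℝ ↦ ω i;
      Measure.pi fun _ : Fin 2 => gaussianReal 0 1] = 1 := by
    rw [covariance_self (measurable_pi_apply i).aemeasurable]
    have h := (measurePreserving_eval (fun _ : Fin 2 => gaussianReal 0 1) i).hasLaw.variance_eq
    rw [variance_id_gaussianReal] at h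
    exact h
  have hind : iIndepFun (fun i (ω : Fin 2 → ℝ) ↦ ω i)
      (Measure.pi fun _ : Fin 2 => gaussianReal 0 1) :=
    iIndepFun_pi (X := fun _ ↦ id) fun _ ↦ aemeasurable_id
  have hcov {i j : Fin 2} (hij : i ≠ j) :
      cov[fun ω : Fin 2 → ℝ ↦ ω i, fun ω : Fin 2 → ℝ ↦ ω j;
        Measure.pi fun _ : Fin 2 => gaussianReal 0 1] = 0 :=
    (hind.indepFun hij).covariance_eq_zero (hm i) (hm j)
  rw [covariance_fun_sum_fun_sum (fun i ↦ (hm i).const_mul _) (fun i ↦ (hm i).const_mul _)]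
  simp [covariance_const_mul_left, covariance_const_mul_right, Fin.sum_univ_two, hvar, hcov, mul_comm]

/-- All moments of a real Gaussian random variable are finite. -/
lemma integrable_pow_of_hasGaussianLaw {Ω : Type*} {mΩ : MeasurableSpace Ω} {P : Measure Ω}
    {X : Ω → ℝ} (hX : HasGaussianLaw X P) (n : ℕ) : Integrable (fun ω ↦ X ω ^ n) P := by
  have := hX.isProbabilityMeasure
  have h := (hX.memLp (p := n) (by simp)).integrable_norm_pow'
  refine (integrable_norm_iff (hX.aemeasurable.pow_const n).aestronglyMeasurable).1 ?_
  simpa [norm_pow] using h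

/-- Moment formula for `Y = α X + R` with `X` and `R` independent with finite moments. -/
lemma integral_pow_mul_pow_of_indepFun_sub {Ω : Type*} {mΩ : MeasurableSpace Ω} {P : Measure Ω}
    {X Y : Ω → ℝ} {α : ℝ} (hind : IndepFun X (fun ω ↦ Y ω - α * X ω) P)
    (hX : ∀ n : ℕ, Integrable (fun ω ↦ X ω ^ n) P)
    (hR : ∀ n : ℕ, Integrable (fun ω ↦ (Y ω - α * X ω) ^ n) P) (i j : ℕ) :
    ∫ ω, X ω ^ i * Y ω ^ j ∂P
      = ∑ k ∈ Finset.range (j + 1),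
          (j.choose k : ℝ) * α ^ k * (∫ ω, X ω ^ (i + k) ∂P)
            * (∫ ω, (Y ω - α * X ω) ^ (j - k) ∂P) := by
  have hpow (m n : ℕ) : IndepFun (fun ω ↦ X ω ^ m) (fun ω ↦ (Y ω - α * X ω) ^ n) P :=
    hind.comp (measurable_id.pow_const m) (measurable_id.pow_const n)
  have hexp (ω : Ω) : X ω ^ i * Y ω ^ j = ∑ k ∈ Finset.range (j + 1),
      (j.choose k * α ^ k) * (X ω ^ (i + k) * (Y ω - α * X ω) ^ (j - k)) := by
    conv_lhs => rw [show Y ω = α * X ω + (Y ω - α * X ω) by ring, add_pow, Finset.mul_sum]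
    refine Finset.sum_congr rfl fun k _ ↦ ?_
    rw [mul_pow, pow_add]
    ring
  simp_rw [hexp]
  have hterm (k : ℕ) : Integrable
      (fun ω ↦ (j.choose k * α ^ k) * (X ω ^ (i + k) * (Y ω - α * X ω) ^ (j - k))) P :=
    ((hpow (i + k) (j - k)).integrable_mul (hX _) (hR _)).const_mul _
  rw [integral_finsetSum _ fun k _ ↦ hterm k]
  refine Finset.sum_congr rfl fun k _ ↦ ?_
  rw [integral_const_mul, (hpow _ _).integral_fun_mul_eq_mul_integral
    (hX _).aestronglyMeasurable (hR _).aestronglyMeasurable, mul_assoc, mul_assoc, mul_assoc]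

/-- For `(x, y)` centered Gaussian with covariance `Δ` (`Δ` symmetric PSD, `Δ₀₀ > 0`)
and `α = Δ₀₁ / Δ₀₀`, for all naturals `i, j`:
`E[x^i y^j] = Σ_{k=0}^{j} C(j,k) α^k E[x^{i+k}] E[(y − αx)^{j−k}]`. -/
theorem stmt_4 (Δ L : Matrix (Fin 2) (Fin 2) ℝ) (hΔ : Δ.PosSemidef) (h00 : 0 < Δ 0 0)
    (hL : L * Lᵀ = Δ) (μ : Measure (Fin 2 → ℝ))
    (hμ : μ = Measure.map L.mulVec (Measure.pi fun _ : Fin 2 => gaussianReal 0 1))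
    (i j : ℕ) :
    ∫ z, (z 0) ^ i * (z 1) ^ j ∂μ
      = ∑ k ∈ Finset.range (j + 1),
          (j.choose k : ℝ) * (Δ 0 1 / Δ 0 0) ^ k
            * (∫ z, (z 0) ^ (i + k) ∂μ)
            * (∫ z, (z 1 - (Δ 0 1 / Δ 0 0) * z 0) ^ (j - k) ∂μ) := by
  subst hμ
  have hL_meas : Measurable L.mulVec := by fun_prop
  have hg : HasGaussianLaw (fun (z : Fin 2 → ℝ) (i : Fin 2) ↦ z i)
      (Measure.map L.mulVec (Measure.pi fun _ : Fin 2 => gaussianReal 0 1)) := by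
    have h := hasGaussianLaw_coords.map_fun (Matrix.toLin' L).toContinuousLinearMap
    have : IsGaussian (Measure.map L.mulVec (Measure.pi fun _ : Fin 2 => gaussianReal 0 1)) :=
      h.isGaussian_map
    exact IsGaussian.hasGaussianLaw_id
  set α := Δ 0 1 / Δ 0 0 with hα
  have hpair : HasGaussianLaw (fun z : Fin 2 → ℝ ↦ (z 0, z 1 - α * z 0))
      (Measure.map L.mulVec (Measure.pi fun _ : Fin 2 => gaussianReal 0 1)) :=
    hg.map_fun ((ContinuousLinearMap.proj (R := ℝ) (φ := fun _ : Fin 2 ↦ ℝ) 0).prod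
      (ContinuousLinearMap.proj (R := ℝ) (φ := fun _ : Fin 2 ↦ ℝ) 1
        - α • ContinuousLinearMap.proj (R := ℝ) (φ := fun _ : Fin 2 ↦ ℝ) 0))
  have hcov : cov[fun z : Fin 2 → ℝ ↦ z 0, fun z : Fin 2 → ℝ ↦ z 1 - α * z 0;
      Measure.map L.mulVec (Measure.pi fun _ : Fin 2 => gaussianReal 0 1)] = 0 := by
    rw [covariance_map_fun hpair.fst.aemeasurable.aestronglyMeasurable
      hpair.snd.aemeasurable.aestronglyMeasurable hL_meas.aemeasurable]
    have h := covariance_linear_coords (L 0) (fun k ↦ L 1 k - α * L 0 k)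
    convert h using 1
    · congr 1
      ext ω
      simp [Matrix.mulVec, dotProduct, Fin.sum_univ_two]
      ring
    · have h1 : Δ 0 1 = L 0 0 * L 1 0 + L 0 1 * L 1 1 := by
        simp [← hL, Matrix.mul_apply, Fin.sum_univ_two]
      have h0 : Δ 0 0 = L 0 0 * L 0 0 + L 0 1 * L 0 1 := by
        simp [← hL, Matrix.mul_apply, Fin.sum_univ_two]
      have hαΔ : α * Δ 0 0 = Δ 0 1 := div_mul_cancel₀ _ h00.ne'
      rw [h0, h1] at hαΔ
      rw [Fin.sum_univ_two]
      linear_combination hαΔ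
  exact integral_pow_mul_pow_of_indepFun_sub (hpair.indepFun_of_covariance_eq_zero hcov)
    (integrable_pow_of_hasGaussianLaw hpair.fst) (integrable_pow_of_hasGaussianLaw hpair.snd) i j
end

section
/- Let a, b ∈ ℝ^h be nonzero vectors, let W be a random vector in ℝ^h with law the standard Gaussian measure N(0, I_h), and let θ = arccos(⟨a, b⟩ / (‖a‖ ‖b‖)) ∈ [0, π]. Then the probability that both ⟨a, W⟩ > 0 and ⟨b, W⟩ > 0 equals (π − θ) / (2π). Equivalently, E[σ̇(⟨a,W⟩) σ̇(⟨b,W⟩)] = (1/2) κ₀(cos θ), where σ̇(t) = 1 if t > 0 and 0 otherwise, and κ₀(x) = (1/π)(π − arccos(x)). -/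
/-!
The event only depends on the joint law of the normalised projections `⟨a,W⟩/‖a‖` and
`⟨b,W⟩/‖b‖`. Its characteristic function is determined by the Gram matrix of the two unit vectors
(`map_pair_gaussian_congr`), so `a/‖a‖`, `b/‖b‖` may be replaced by `(1, 0)` and `(cos θ, sin θ)` in
the plane; no independence of `a` and `b` is needed, so the cases `θ = 0` and `θ = π` are included.

In the plane the standard Gaussian is rotation invariant: in polar coordinates the mass of a cone is
a constant multiple of the length of its set of angles (`gaussian_prod_cone`), the constant being
`1/(2π)` because the total mass is one. The cone at hand is `{cos φ > 0, cos (φ - θ) > 0}`, that is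
`φ ∈ (θ - π/2, π/2)`, of length `π - θ`.
-/

open MeasureTheory ProbabilityTheory Real
open Set

/-- The joint characteristic function of two Gaussian projections, in terms of the Gram matrix
of the two vectors. -/
lemma charFunDual_map_pair {ι : Type*} [Fintype ι] (u v : ι → ℝ) (L : StrongDual ℝ (ℝ × ℝ)) :
    charFunDual ((Measure.pi (fun _ : ι => gaussianReal 0 1)).map
      (fun w => (∑ i, u i * w i, ∑ i, v i * w i))) L =
    Complex.exp (-((L (1, 0) ^ 2 * ∑ i, u i ^ 2 + 2 * L (1, 0) * L (0, 1) * ∑ i, u i * v i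
      + L (0, 1) ^ 2 * ∑ i, v i ^ 2 : ℝ) : ℂ) / 2) := by
  have hm : Measurable (fun w : ι → ℝ => (∑ i, u i * w i, ∑ i, v i * w i)) := by fun_prop
  rw [charFunDual_apply, integral_map hm.aemeasurable
    (Measurable.aestronglyMeasurable (by fun_prop))]
  set s := L (1, 0)
  set t := L (0, 1)
  have hL : ∀ x y : ℝ, L (x, y) = s * x + t * y := by
    intro x y
    have : ((x, y) : ℝ × ℝ) = x • ((1 : ℝ), (0 : ℝ)) + y • ((0 : ℝ), (1 : ℝ)) := by simp
    rw [this, map_add, map_smul, map_smul, smul_eq_mul, smul_eq_mul, mul_comm x, mul_comm y]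
  have h1 : ∀ w : ι → ℝ,
      Complex.exp ((L (∑ i, u i * w i, ∑ i, v i * w i) : ℂ) * Complex.I) =
        ∏ i, Complex.exp (((s * u i + t * v i : ℝ) : ℂ) * (w i : ℂ) * Complex.I) := by
    intro w
    rw [hL, ← Complex.exp_sum, ← Finset.sum_mul]
    congr 2
    rw [Finset.mul_sum, Finset.mul_sum, ← Finset.sum_add_distrib]
    push_cast
    exact Finset.sum_congr rfl fun i _ => by ring
  simp_rw [h1]
  rw [integral_fintype_prod_eq_prod (𝕜 := ℂ)
    (f := fun i (x : ℝ) => Complex.exp (((s * u i + t * v i : ℝ) : ℂ) * (x : ℂ) * Complex.I))]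
  simp_rw [← charFun_apply_real, charFun_gaussianReal]
  rw [← Complex.exp_sum]
  congr 1
  rw [Finset.mul_sum, Finset.mul_sum, Finset.mul_sum, ← Finset.sum_add_distrib,
    ← Finset.sum_add_distrib]
  push_cast
  rw [← Finset.sum_neg_distrib, Finset.sum_div]
  exact Finset.sum_congr rfl fun i _ => by ring

lemma map_pair_gaussian_congr {ι κ : Type*} [Fintype ι] [Fintype κ] (u v : ι → ℝ) (u' v' : κ → ℝ)
    (huu : ∑ i, u i ^ 2 = ∑ i, u' i ^ 2) (huv : ∑ i, u i * v i = ∑ i, u' i * v' i)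
    (hvv : ∑ i, v i ^ 2 = ∑ i, v' i ^ 2) :
    (Measure.pi (fun _ : ι => gaussianReal 0 1)).map
      (fun w => (∑ i, u i * w i, ∑ i, v i * w i)) =
    (Measure.pi (fun _ : κ => gaussianReal 0 1)).map
      (fun w => (∑ i, u' i * w i, ∑ i, v' i * w i)) := by
  have h1 := Measure.isProbabilityMeasure_map (μ := Measure.pi (fun _ : ι => gaussianReal 0 1))
    (f := fun w => (∑ i, u i * w i, ∑ i, v i * w i)) (Measurable.aemeasurable (by fun_prop))
  have h2 := Measure.isProbabilityMeasure_map (μ := Measure.pi (fun _ : κ => gaussianReal 0 1))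
    (f := fun w => (∑ i, u' i * w i, ∑ i, v' i * w i)) (Measurable.aemeasurable (by fun_prop))
  refine Measure.ext_of_charFunDual ?_
  ext L
  rw [charFunDual_map_pair, charFunDual_map_pair, huu, huv, hvv]

/-- The planar Gaussian density is radial. -/
lemma gaussianPDF_polar (r φ : ℝ) :
    gaussianPDF 0 1 (r * cos φ) * gaussianPDF 0 1 (r * sin φ) =
      gaussianPDF 0 1 r * gaussianPDF 0 1 0 := by
  simp only [gaussianPDF]
  rw [← ENNReal.ofReal_mul (gaussianPDFReal_nonneg _ _ _),
    ← ENNReal.ofReal_mul (gaussianPDFReal_nonneg _ _ _)]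
  congr 1
  simp only [gaussianPDFReal_def]
  rw [mul_mul_mul_comm, mul_mul_mul_comm _ _ _ (rexp (-(0 - 0) ^ 2 / _)), ← Real.exp_add,
    ← Real.exp_add]
  congr 2
  have := sin_sq_add_cos_sq φ
  push_cast
  linear_combination (-r ^ 2 / 2) * this

/-- If `S` is a cone with set of angles `A`, its planar Gaussian mass is the length of `A` times
the radial mass. -/
lemma gaussian_prod_cone_aux (S : Set (ℝ × ℝ)) (A : Set ℝ) (hS : MeasurableSet S)
    (hA : MeasurableSet A)
    (h : ∀ r φ : ℝ, 0 < r → φ ∈ Ioo (-π) π → ((r * cos φ, r * sin φ) ∈ S ↔ φ ∈ A)) :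
    ((gaussianReal 0 1).prod (gaussianReal 0 1)) S =
      (∫⁻ r in Ioi (0 : ℝ), ENNReal.ofReal r * (gaussianPDF 0 1 r * gaussianPDF 0 1 0)) *
        volume (A ∩ Ioo (-π) π) := by
  have hg := measurable_gaussianPDF 0 1
  rw [gaussianReal_of_var_ne_zero _ one_ne_zero, prod_withDensity hg hg,
    withDensity_apply _ hS, ← lintegral_indicator hS, ← Measure.volume_eq_prod,
    ← lintegral_comp_polarCoord_symm]
  have h1 : ∀ p ∈ polarCoord.target, ENNReal.ofReal p.1 •
      S.indicator (fun z : ℝ × ℝ => gaussianPDF 0 1 z.1 * gaussianPDF 0 1 z.2)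
        (polarCoord.symm p) =
      (ENNReal.ofReal p.1 * (gaussianPDF 0 1 p.1 * gaussianPDF 0 1 0)) *
        A.indicator (fun _ => 1) p.2 := by
    rintro ⟨r, φ⟩ ⟨hr, hφ⟩
    have := h r φ hr hφ
    simp only [polarCoord_symm_apply, smul_eq_mul]
    by_cases hx : φ ∈ A
    · rw [indicator_of_mem (this.2 hx), indicator_of_mem hx, gaussianPDF_polar, mul_one]
    · rw [indicator_of_notMem (fun q => hx (this.1 q)), indicator_of_notMem hx]
      simp
  rw [setLIntegral_congr_fun (by exact polarCoord.open_target.measurableSet) h1,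
    polarCoord_target, Measure.volume_eq_prod, ← Measure.prod_restrict,
    lintegral_prod_mul (f := fun r => ENNReal.ofReal r * (gaussianPDF 0 1 r * gaussianPDF 0 1 0))
      (g := A.indicator (fun _ => 1)) (by fun_prop)
      ((measurable_const.indicator hA).aemeasurable), lintegral_indicator hA,
    Measure.restrict_restrict hA]
  simp

lemma gaussian_prod_cone (S : Set (ℝ × ℝ)) (A : Set ℝ) (hS : MeasurableSet S)
    (hA : MeasurableSet A)
    (h : ∀ r φ : ℝ, 0 < r → φ ∈ Ioo (-π) π → ((r * cos φ, r * sin φ) ∈ S ↔ φ ∈ A)) :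
    ((gaussianReal 0 1).prod (gaussianReal 0 1)) S =
      volume (A ∩ Ioo (-π) π) / ENNReal.ofReal (2 * π) := by
  have hu := gaussian_prod_cone_aux univ univ MeasurableSet.univ MeasurableSet.univ (by simp)
  rw [measure_univ, univ_inter, Real.volume_Ioo, show π - -π = 2 * π by ring] at hu
  rw [gaussian_prod_cone_aux S A hS hA h, ENNReal.eq_inv_of_mul_eq_one_left hu.symm, mul_comm,
    div_eq_mul_inv]

lemma measurableSet_two_pos {α : Type*} [MeasurableSpace α] {f g : α → ℝ} (hf : Measurable f)
    (hg : Measurable g) : MeasurableSet {x | 0 < f x ∧ 0 < g x} :=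
  (measurableSet_lt measurable_const hf).inter (measurableSet_lt measurable_const hg)

lemma gaussian_prod_two_halfplanes (θ : ℝ) (h0 : 0 ≤ θ) (h1 : θ ≤ π) :
    ((gaussianReal 0 1).prod (gaussianReal 0 1))
      {p : ℝ × ℝ | 0 < p.1 ∧ 0 < cos θ * p.1 + sin θ * p.2} =
      ENNReal.ofReal ((π - θ) / (2 * π)) := by
  have hpi := Real.pi_pos
  rw [gaussian_prod_cone _ (Ioo (θ - π / 2) (π / 2)) _ measurableSet_Ioo, inter_eq_left.2,
    Real.volume_Ioo, ← ENNReal.ofReal_div_of_pos (by positivity)]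
  · congr 2; ring
  · exact Ioo_subset_Ioo (by linarith) (by linarith)
  · intro r φ hr hφ
    have e : cos θ * (r * cos φ) + sin θ * (r * sin φ) = r * cos (φ - θ) := by
      rw [cos_sub]; ring
    simp only [mem_ofPred_eq, e, mul_pos_iff_of_pos_left hr]
    constructor
    · rintro ⟨c1, c2⟩
      constructor
      · by_contra! hc
        have := cos_nonpos_of_pi_div_two_le_of_le (x := -(φ - θ)) (by linarith)
        rw [cos_neg] at this
        -- the angle `φ - θ` may lie below `-3π/2`, where its cosine is positive, but then `cos φ` is already nonpositive
        rcases le_or_gt (-(φ - θ)) (π + π / 2) with h3 | h3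
        · linarith [this h3]
        · have := cos_nonpos_of_pi_div_two_le_of_le (x := -φ) (by linarith) (by linarith [hφ.1])
          rw [cos_neg] at this
          linarith
      · by_contra! hc
        linarith [cos_nonpos_of_pi_div_two_le_of_le hc (by linarith [hφ.2])]
    · rintro ⟨c1, c2⟩
      exact ⟨cos_pos_of_mem_Ioo ⟨by linarith, c2⟩, cos_pos_of_mem_Ioo ⟨by linarith, by linarith⟩⟩
  · exact measurableSet_two_pos (by fun_prop) (by fun_prop)

/-- For nonzero `a, b ∈ ℝ^h`, `W ∼ N(0, I_h)` and
`θ = arccos(⟨a,b⟩/(‖a‖‖b‖))`, the probability that `⟨a,W⟩ > 0` and `⟨b,W⟩ > 0` equals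
`(π − θ)/(2π)`; equivalently `E[σ̇(⟨a,W⟩) σ̇(⟨b,W⟩)] = (1/2) κ₀(cos θ)` with
`σ̇ = 𝟙_{(0,∞)}` and `κ₀(x) = (π − arccos x)/π`. -/
theorem stmt_11 (h : ℕ) (a b : Fin h → ℝ) (ha : a ≠ 0) (hb : b ≠ 0)
    (μ : Measure (Fin h → ℝ))
    (hμ : μ = Measure.pi (fun _ : Fin h => gaussianReal 0 1))
    (θ : ℝ)
    (hθ : θ = Real.arccos ((∑ i, a i * b i) /
        (Real.sqrt (∑ i, a i ^ 2) * Real.sqrt (∑ i, b i ^ 2)))) :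
    μ {w | 0 < ∑ i, a i * w i ∧ 0 < ∑ i, b i * w i}
        = ENNReal.ofReal ((π - θ) / (2 * π))
      ∧ ∫ w, (if 0 < ∑ i, a i * w i then (1 : ℝ) else 0)
            * (if 0 < ∑ i, b i * w i then (1 : ℝ) else 0) ∂μ
          = (1 / 2) * ((1 / π) * (π - Real.arccos (Real.cos θ))) := by
  have hpi := Real.pi_pos
  have h0 : 0 ≤ θ := hθ ▸ arccos_nonneg _
  have h1 : θ ≤ π := hθ ▸ arccos_le_pi _
  have pos : ∀ c : Fin h → ℝ, c ≠ 0 → 0 < ∑ i, c i ^ 2 := by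
    intro c hc
    obtain ⟨i, hi⟩ := Function.ne_iff.1 hc
    exact Finset.sum_pos' (fun i _ => sq_nonneg _) ⟨i, Finset.mem_univ _, by have : c i ≠ 0 := hi; positivity⟩
  have hA := pos a ha
  have hB := pos b hb
  set A := √(∑ i, a i ^ 2) with hAdef
  set B := √(∑ i, b i ^ 2) with hBdef
  have hA2 : A ^ 2 = ∑ i, a i ^ 2 := sq_sqrt hA.le
  have hB2 : B ^ 2 = ∑ i, b i ^ 2 := sq_sqrt hB.le
  have hA0 : 0 < A := sqrt_pos.2 hA
  have hB0 : 0 < B := sqrt_pos.2 hB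
  have hcos : cos θ = (∑ i, a i * b i) / (A * B) := by
    have hcs : |∑ i, a i * b i| ≤ A * B := by
      apply abs_le_of_sq_le_sq _ (by positivity)
      rw [mul_pow, hA2, hB2]
      exact Finset.sum_mul_sq_le_sq_mul_sq _ _ _
    have := abs_le.1 hcs
    rw [hθ, cos_arccos]
    · rw [le_div_iff₀ (by positivity)]; linarith
    · rw [div_le_iff₀ (by positivity)]; linarith
  have hmeas : MeasurableSet {w : Fin h → ℝ | 0 < ∑ i, a i * w i ∧ 0 < ∑ i, b i * w i} :=
    measurableSet_two_pos (by fun_prop) (by fun_prop)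
  have hQ : MeasurableSet {p : ℝ × ℝ | 0 < p.1 ∧ 0 < p.2} :=
    measurableSet_two_pos (by fun_prop) (by fun_prop)
  have key : μ {w | 0 < ∑ i, a i * w i ∧ 0 < ∑ i, b i * w i}
      = ENNReal.ofReal ((π - θ) / (2 * π)) := by
    have hlaw := map_pair_gaussian_congr (fun i => A⁻¹ * a i) (fun i => B⁻¹ * b i)
      ![1, 0] ![cos θ, sin θ]
      (by simp_rw [mul_pow]
          rw [← Finset.mul_sum, ← hA2]
          simp [hA0.ne'])
      (by simp_rw [mul_mul_mul_comm A⁻¹ _ B⁻¹ _]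
          rw [← Finset.mul_sum]
          simp [hcos, div_eq_mul_inv, mul_comm])
      (by simp_rw [mul_pow]
          rw [← Finset.mul_sum, ← hB2]
          simp [hB0.ne'])
    have hlaw' := congrArg (fun ν => ν {p : ℝ × ℝ | 0 < p.1 ∧ 0 < p.2}) hlaw
    rw [Measure.map_apply (by fun_prop) hQ, Measure.map_apply (by fun_prop) hQ] at hlaw'
    rw [hμ, ← gaussian_prod_two_halfplanes θ h0 h1]
    have hS : MeasurableSet {p : ℝ × ℝ | 0 < p.1 ∧ 0 < cos θ * p.1 + sin θ * p.2} :=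
      measurableSet_two_pos (by fun_prop) (by fun_prop)
    rw [← (measurePreserving_piFinTwo (fun _ => gaussianReal 0 1)).measure_preimage
      hS.nullMeasurableSet]
    convert hlaw' using 2
    · ext w
      simp only [mem_ofPred_eq, mem_preimage, mul_assoc, ← Finset.mul_sum]
      rw [mul_pos_iff_of_pos_left (inv_pos.2 hA0), mul_pos_iff_of_pos_left (inv_pos.2 hB0)]
    · ext w
      simp [Fin.sum_univ_two]
  refine ⟨key, ?_⟩
  have hind : (fun w : Fin h → ℝ => (if 0 < ∑ i, a i * w i then (1 : ℝ) else 0)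
            * (if 0 < ∑ i, b i * w i then (1 : ℝ) else 0)) =
      {w : Fin h → ℝ | 0 < ∑ i, a i * w i ∧ 0 < ∑ i, b i * w i}.indicator 1 := by
    ext w
    simp only [indicator_apply, mem_ofPred_eq, Pi.one_apply, ite_and]
    split_ifs <;> simp
  rw [hind, integral_indicator_one hmeas, Measure.real, key,
    ENNReal.toReal_ofReal (div_nonneg (by linarith) (by linarith)), arccos_cos h0 h1]
  field_simp
end

section
/- Let a, b ∈ ℝ^h be nonzero vectors, let W be a random vector in ℝ^h with law the standard Gaussian measure N(0, I_h), and let θ = arccos(⟨a, b⟩ / (‖a‖ ‖b‖)) ∈ [0, π]. Then E[max(⟨a, W⟩, 0) · max(⟨b, W⟩, 0)] = (‖a‖ ‖b‖ / 2) · κ₁(cos θ), where κ₁(x) = (1/π)( x (π − arccos(x)) + √(1 − x²) ). -/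
open MeasureTheory ProbabilityTheory Real

/-!
The joint law of `(⟨a, W⟩, ⟨b, W⟩)` for a standard Gaussian vector `W` depends only on the Gram
matrix of `a` and `b`, because its characteristic function at `(s, t)` is
`exp (-‖s a + t b‖² / 2)` (`map_pairForm_eq_of_gram_eq`). With `A = ‖a‖`, `B = ‖b‖`, the vectors
`a, b` may therefore be replaced by `(A, 0)` and `(B cos θ, B sin θ)` in the plane. By positive
homogeneity of the ReLU, what remains is the planar integral for two unit vectors at angle `θ`.
In polar coordinates (`integral_relu_mul_relu_plane`) it splits into the radial factor
`(2π)⁻¹ ∫ r³ exp (-r²/2) dr = π⁻¹` and the angular factor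
`∫ max (cos φ) 0 * max (cos (φ - θ)) 0 dφ`. The latter integrand is supported on
`[θ - π/2, π/2]`, and the integral equals `((π - θ) cos θ + sin θ) / 2`
(`integral_relu_cos_mul_relu_cos_sub`).
-/

/-- The linear map `w ↦ (⟨a, w⟩, ⟨b, w⟩)`. -/
noncomputable def pairForm {ι : Type*} [Fintype ι] (a b : ι → ℝ) : (ι → ℝ) →L[ℝ] ℝ × ℝ :=
  (∑ i, a i • ContinuousLinearMap.proj i).prod (∑ i, b i • ContinuousLinearMap.proj i)

lemma pairForm_apply {ι : Type*} [Fintype ι] (a b w : ι → ℝ) :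
    pairForm a b w = (∑ i, a i * w i, ∑ i, b i * w i) := by
  simp [pairForm]

lemma charFunDual_gaussianReal_zero_one (L : StrongDual ℝ ℝ) :
    charFunDual (gaussianReal 0 1) L = Complex.exp (((-(L 1) ^ 2 / 2 : ℝ)) : ℂ) := by
  have h1 : charFunDual (gaussianReal 0 1) L = charFun (gaussianReal 0 1) (L 1) := by
    rw [charFunDual_apply, charFun_apply_real]
    congr 1
    ext x
    have : L x = L 1 * x := by
      have := L.map_smul x 1
      simp only [smul_eq_mul, mul_one] at this
      rw [this, mul_comm]
    rw [this]
    push_cast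
    rfl
  rw [h1, charFun_gaussianReal]
  congr 1
  push_cast
  ring

lemma charFunDual_map_pairForm {ι : Type*} [Fintype ι] (a b : ι → ℝ) (L : StrongDual ℝ (ℝ × ℝ)) :
    charFunDual ((Measure.pi (fun _ : ι => gaussianReal 0 1)).map (pairForm a b)) L =
      Complex.exp (((-(L (1, 0) ^ 2 * ∑ i, a i ^ 2 + 2 * L (1, 0) * L (0, 1) * ∑ i, a i * b i
        + L (0, 1) ^ 2 * ∑ i, b i ^ 2) / 2 : ℝ)) : ℂ) := by
  classical
  rw [charFunDual_map, charFunDual_pi]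
  simp_rw [charFunDual_gaussianReal_zero_one]
  rw [← Complex.exp_sum, ← Complex.ofReal_sum]
  have key : ∀ i, ((L.comp (pairForm a b)).comp (ContinuousLinearMap.single ℝ (fun _ : ι => ℝ) i)) 1
      = a i * L (1, 0) + b i * L (0, 1) := by
    intro i
    have : pairForm a b (Pi.single i (1 : ℝ)) = a i • ((1 : ℝ), (0 : ℝ)) + b i • ((0 : ℝ), (1 : ℝ)) := by
      rw [pairForm_apply]
      simp [Pi.single_apply]
    simp only [ContinuousLinearMap.comp_apply, ContinuousLinearMap.single_apply]
    rw [this, map_add, map_smul, map_smul]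
    simp
  simp_rw [key]
  congr 2
  simp only [Finset.mul_sum, ← Finset.sum_add_distrib, ← Finset.sum_neg_distrib, Finset.sum_div]
  refine Finset.sum_congr rfl fun i _ => ?_
  ring

/-- The joint law of two linear functionals of a standard Gaussian vector is determined by their
Gram matrix, whatever the dimension of the underlying space. -/
lemma map_pairForm_eq_of_gram_eq {ι κ : Type*} [Fintype ι] [Fintype κ] {a b : ι → ℝ}
    {a' b' : κ → ℝ} (haa : ∑ i, a i ^ 2 = ∑ i, a' i ^ 2) (hbb : ∑ i, b i ^ 2 = ∑ i, b' i ^ 2)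
    (hab : ∑ i, a i * b i = ∑ i, a' i * b' i) :
    (Measure.pi (fun _ : ι => gaussianReal 0 1)).map (pairForm a b) =
      (Measure.pi (fun _ : κ => gaussianReal 0 1)).map (pairForm a' b') := by
  have := Measure.isProbabilityMeasure_map (μ := Measure.pi (fun _ : ι => gaussianReal 0 1))
    (pairForm a b).continuous.aemeasurable
  have := Measure.isProbabilityMeasure_map (μ := Measure.pi (fun _ : κ => gaussianReal 0 1))
    (pairForm a' b').continuous.aemeasurable
  refine Measure.ext_of_charFunDual ?_
  ext L
  rw [charFunDual_map_pairForm, charFunDual_map_pairForm, haa, hbb, hab]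

lemma integral_relu_cos_mul_relu_cos_sub {θ : ℝ} (h0 : 0 ≤ θ) (hπ : θ ≤ π) :
    ∫ φ in -π..π, max (cos φ) 0 * max (cos (φ - θ)) 0 = ((π - θ) * cos θ + sin θ) / 2 := by
  have hc : Continuous fun φ : ℝ => max (cos φ) 0 * max (cos (φ - θ)) 0 := by fun_prop
  rw [← intervalIntegral.integral_add_adjacent_intervals (b := θ - π / 2)
    (hc.intervalIntegrable _ _) (hc.intervalIntegrable _ _),
    ← intervalIntegral.integral_add_adjacent_intervals (a := θ - π / 2) (b := π / 2)
    (hc.intervalIntegrable _ _) (hc.intervalIntegrable _ _)]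
  have cos_np : ∀ x, -π - π / 2 ≤ x → x ≤ -(π / 2) → cos x ≤ 0 := by
    intro x h1 h2
    rw [← cos_neg]
    exact cos_nonpos_of_pi_div_two_le_of_le (by linarith) (by linarith)
  have hp := pi_pos
  have e1 : ∫ φ in -π..(θ - π / 2), max (cos φ) 0 * max (cos (φ - θ)) 0 = 0 := by
    rw [intervalIntegral.integral_congr (g := fun _ => (0 : ℝ))]
    · simp
    intro φ hφ
    rw [Set.uIcc_of_le (by linarith)] at hφ
    obtain ⟨h1, h2⟩ := hφ
    rcases le_total φ (-(π / 2)) with h | h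
    · simp [max_eq_right (cos_np φ (by linarith) h)]
    · simp [max_eq_right (cos_np (φ - θ) (by linarith) (by linarith))]
  have e3 : ∫ φ in (π / 2)..π, max (cos φ) 0 * max (cos (φ - θ)) 0 = 0 := by
    rw [intervalIntegral.integral_congr (g := fun _ => (0 : ℝ))]
    · simp
    intro φ hφ
    rw [Set.uIcc_of_le (by linarith)] at hφ
    obtain ⟨h1, h2⟩ := hφ
    have : cos φ ≤ 0 := cos_nonpos_of_pi_div_two_le_of_le h1 (by linarith)
    simp [max_eq_right this]
  have e2 : ∫ φ in (θ - π / 2)..(π / 2), max (cos φ) 0 * max (cos (φ - θ)) 0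
      = ((π - θ) * cos θ + sin θ) / 2 := by
    rw [intervalIntegral.integral_congr (g := fun φ => (cos θ + cos (2 * φ - θ)) / 2)]
    · -- An explicit primitive of `(cos θ + cos (2 φ - θ)) / 2`.
      have hd : ∀ x ∈ Set.uIcc (θ - π / 2) (π / 2), HasDerivAt
          (fun φ => (φ * cos θ + sin (2 * φ - θ) / 2) / 2) ((cos θ + cos (2 * x - θ)) / 2) x := by
        intro x _
        have h2 : HasDerivAt (fun φ : ℝ => 2 * φ - θ) 2 x := by
          simpa using ((hasDerivAt_id x).const_mul 2).sub_const θ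
        have := (((hasDerivAt_id' x).mul_const (cos θ)).fun_add (h2.sin.div_const 2)).div_const 2
        exact this.congr_deriv (by ring)
      rw [intervalIntegral.integral_eq_sub_of_hasDerivAt hd
        (Continuous.intervalIntegrable (by fun_prop) _ _)]
      rw [show 2 * (π / 2) - θ = π - θ by ring, show 2 * (θ - π / 2) - θ = -(π - θ) by ring,
        sin_neg, sin_pi_sub]
      ring
    intro φ hφ
    rw [Set.uIcc_of_le (by linarith)] at hφ
    obtain ⟨h1, h2⟩ := hφ
    have c1 : 0 ≤ cos φ := cos_nonneg_of_mem_Icc ⟨by linarith, by linarith⟩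
    have c2 : 0 ≤ cos (φ - θ) := cos_nonneg_of_mem_Icc ⟨by linarith, by linarith⟩
    simp only [max_eq_left c1, max_eq_left c2]
    have t1 : cos θ = cos (φ - (φ - θ)) := by congr 1; ring
    have t2 : cos (2 * φ - θ) = cos (φ + (φ - θ)) := by congr 1; ring
    rw [t2, cos_add]
    rw [cos_sub φ (φ - θ)] at t1
    linarith
  rw [e1, e2, e3]
  ring

lemma integral_pow_three_mul_exp_neg_sq_div_two :
    ∫ r in Set.Ioi (0 : ℝ), r ^ 3 * exp (-r ^ 2 / 2) = 2 := by
  have h := integral_rpow_mul_exp_neg_mul_rpow (p := 2) (q := 3) (b := 1 / 2)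
    (by norm_num) (by norm_num) (by norm_num)
  have e : ((3 : ℝ) + 1) / 2 = 2 := by norm_num
  have e' : -((3 : ℝ) + 1) / 2 = -2 := by norm_num
  rw [e, e', Gamma_two, rpow_neg (by norm_num)] at h
  norm_num at h
  refine Eq.trans (setIntegral_congr_fun measurableSet_Ioi fun r _ => ?_) h
  have : -r ^ 2 / 2 = -(1 / 2 * r ^ 2) := by ring
  simp only [this]

lemma integral_gaussianReal_prod (f : ℝ × ℝ → ℝ) :
    ∫ p, f p ∂((gaussianReal 0 1).prod (gaussianReal 0 1)) =
      ∫ p : ℝ × ℝ, (2 * π)⁻¹ * exp (-(p.1 ^ 2 + p.2 ^ 2) / 2) * f p := by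
  rw [gaussianReal_of_var_ne_zero 0 one_ne_zero,
    prod_withDensity (measurable_gaussianPDF 0 1) (measurable_gaussianPDF 0 1),
    integral_withDensity_eq_integral_toReal_smul]
  · rw [← Measure.volume_eq_prod]
    congr 1
    ext p
    rw [ENNReal.toReal_mul, toReal_gaussianPDF, toReal_gaussianPDF, smul_eq_mul]
    congr 1
    simp only [gaussianPDFReal, NNReal.coe_one, mul_one, sub_zero]
    have hs : (√(2 * π))⁻¹ * (√(2 * π))⁻¹ = (2 * π)⁻¹ := by
      rw [← mul_inv, mul_self_sqrt (by positivity)]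
    rw [mul_mul_mul_comm, hs, ← exp_add]
    congr 2
    ring
  · exact ((measurable_gaussianPDF 0 1).comp measurable_fst).mul
      ((measurable_gaussianPDF 0 1).comp measurable_snd)
  · filter_upwards with p
    exact ENNReal.mul_lt_top gaussianPDF_lt_top gaussianPDF_lt_top

lemma integral_relu_mul_relu_plane {θ : ℝ} (h0 : 0 ≤ θ) (hπ : θ ≤ π) :
    ∫ p : ℝ × ℝ, max p.1 0 * max (cos θ * p.1 + sin θ * p.2) 0
      ∂((gaussianReal 0 1).prod (gaussianReal 0 1)) = ((π - θ) * cos θ + sin θ) / (2 * π) := by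
  rw [integral_gaussianReal_prod, ← integral_comp_polarCoord_symm, polarCoord_target]
  have hcongr : ∀ p ∈ Set.Ioi (0 : ℝ) ×ˢ Set.Ioo (-π) π,
      p.1 • ((2 * π)⁻¹ * exp (-((polarCoord.symm p).1 ^ 2 + (polarCoord.symm p).2 ^ 2) / 2) *
        (max (polarCoord.symm p).1 0 *
          max (cos θ * (polarCoord.symm p).1 + sin θ * (polarCoord.symm p).2) 0))
      = ((2 * π)⁻¹ * (p.1 ^ 3 * exp (-p.1 ^ 2 / 2))) *
        (max (cos p.2) 0 * max (cos (p.2 - θ)) 0) := by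
    rintro ⟨r, φ⟩ ⟨hr, -⟩
    have hr : 0 < r := hr
    simp only [polarCoord_symm_apply, smul_eq_mul]
    have a1 : (r * cos φ) ^ 2 + (r * sin φ) ^ 2 = r ^ 2 := by
      linear_combination r ^ 2 * (sin_sq_add_cos_sq φ)
    have a2 : cos θ * (r * cos φ) + sin θ * (r * sin φ) = r * cos (φ - θ) := by
      rw [cos_sub]; ring
    have a3 : ∀ x, max (r * x) 0 = r * max x 0 := fun x => by
      rw [mul_max_of_nonneg _ _ hr.le, mul_zero]
    rw [a1, a2, a3, a3]
    ring
  rw [setIntegral_congr_fun (measurableSet_Ioi.prod measurableSet_Ioo) hcongr,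
    Measure.volume_eq_prod,
    setIntegral_prod_mul (fun r : ℝ => (2 * π)⁻¹ * (r ^ 3 * exp (-r ^ 2 / 2)))
      (fun φ : ℝ => max (cos φ) 0 * max (cos (φ - θ)) 0),
    integral_const_mul, integral_pow_three_mul_exp_neg_sq_div_two, ← integral_Ioc_eq_integral_Ioo,
    ← intervalIntegral.integral_of_le (by linarith [pi_pos]),
    integral_relu_cos_mul_relu_cos_sub h0 hπ]
  field_simp

/-- For nonzero `a, b ∈ ℝ^h`, `W ∼ N(0, I_h)` and `θ = arccos(⟨a,b⟩/(‖a‖‖b‖))`,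
`E[max(⟨a,W⟩,0) · max(⟨b,W⟩,0)] = (‖a‖‖b‖/2) κ₁(cos θ)` where
`κ₁(x) = (1/π)(x (π − arccos x) + √(1 − x²))`. -/
theorem stmt_12 (h : ℕ) (a b : Fin h → ℝ) (ha : a ≠ 0) (hb : b ≠ 0)
    (μ : Measure (Fin h → ℝ))
    (hμ : μ = Measure.pi (fun _ : Fin h => gaussianReal 0 1))
    (θ : ℝ)
    (hθ : θ = Real.arccos ((∑ i, a i * b i) /
        (Real.sqrt (∑ i, a i ^ 2) * Real.sqrt (∑ i, b i ^ 2)))) :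
    ∫ w, max (∑ i, a i * w i) 0 * max (∑ i, b i * w i) 0 ∂μ
      = (Real.sqrt (∑ i, a i ^ 2) * Real.sqrt (∑ i, b i ^ 2) / 2)
          * ((1 / π) * (Real.cos θ * (π - Real.arccos (Real.cos θ))
              + Real.sqrt (1 - Real.cos θ ^ 2))) := by
  have h0 : 0 ≤ θ := hθ ▸ arccos_nonneg _
  have hπ : θ ≤ π := hθ ▸ arccos_le_pi _
  have sq_pos : ∀ c : Fin h → ℝ, c ≠ 0 → 0 < ∑ i, c i ^ 2 := by
    intro c hc
    obtain ⟨i, hi⟩ := Function.ne_iff.mp hc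
    have hi : c i ≠ 0 := hi
    exact Finset.sum_pos' (fun _ _ => sq_nonneg _) ⟨i, Finset.mem_univ i, by positivity⟩
  have hA2 := sq_pos a ha
  have hB2 := sq_pos b hb
  set A := √(∑ i, a i ^ 2) with hA
  set B := √(∑ i, b i ^ 2) with hB
  have hA0 : 0 < A := sqrt_pos.mpr hA2
  have hB0 : 0 < B := sqrt_pos.mpr hB2
  have hAA : A ^ 2 = ∑ i, a i ^ 2 := sq_sqrt hA2.le
  have hBB : B ^ 2 = ∑ i, b i ^ 2 := sq_sqrt hB2.le
  -- Cauchy-Schwarz: the argument of `arccos` lies in `[-1, 1]`.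
  have hcs : |∑ i, a i * b i| ≤ A * B := by
    refine abs_le_of_sq_le_sq ?_ (by positivity)
    rw [mul_pow, hAA, hBB]
    exact Finset.sum_mul_sq_le_sq_mul_sq _ _ _
  have hcos : A * B * cos θ = ∑ i, a i * b i := by
    have hq : |(∑ i, a i * b i) / (A * B)| ≤ 1 := by
      rw [abs_div, abs_of_pos (by positivity : 0 < A * B)]
      exact div_le_one_of_le₀ hcs (by positivity)
    rw [hθ, cos_arccos (abs_le.mp hq).1 (abs_le.mp hq).2]
    field_simp
  have hlaw := map_pairForm_eq_of_gram_eq (a := a) (b := b) (a' := ![A, 0])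
    (b' := ![B * cos θ, B * sin θ]) (by simp [Fin.sum_univ_two, hAA])
    (by
      rw [← hBB]
      simp only [Fin.sum_univ_two, Matrix.cons_val_zero, Matrix.cons_val_one]
      linear_combination -B ^ 2 * (sin_sq_add_cos_sq θ))
    (by
      rw [← hcos]
      simp only [Fin.sum_univ_two, Matrix.cons_val_zero, Matrix.cons_val_one]
      ring)
  have hg : Continuous fun p : ℝ × ℝ => max p.1 0 * max p.2 0 := by fun_prop
  have hint := congrArg (fun ν => ∫ p, max p.1 0 * max p.2 0 ∂ν) hlaw
  rw [integral_map (pairForm _ _).continuous.aemeasurable hg.aestronglyMeasurable,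
    integral_map (pairForm _ _).continuous.aemeasurable hg.aestronglyMeasurable] at hint
  simp only [pairForm_apply] at hint
  rw [hμ, hint]
  have hprod := (measurePreserving_finTwoArrow (gaussianReal 0 1)).integral_comp'
    (fun p : ℝ × ℝ => A * B * (max p.1 0 * max (cos θ * p.1 + sin θ * p.2) 0))
  rw [integral_const_mul (μ := (gaussianReal 0 1).prod (gaussianReal 0 1)),
    integral_relu_mul_relu_plane h0 hπ] at hprod
  rw [arccos_cos h0 hπ, ← abs_sin_eq_sqrt_one_sub_cos_sq,
    abs_of_nonneg (sin_nonneg_of_nonneg_of_le_pi h0 hπ)]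
  trans A * B * (((π - θ) * cos θ + sin θ) / (2 * π))
  · rw [← hprod]
    congr 1
    ext w
    simp only [Fin.sum_univ_two, Matrix.cons_val_zero, Matrix.cons_val_one,
      MeasurableEquiv.finTwoArrow_apply]
    have m : ∀ c x : ℝ, 0 < c → max (c * x) 0 = c * max x 0 := fun c x hc => by
      rw [mul_max_of_nonneg _ _ hc.le, mul_zero]
    rw [show A * w 0 + 0 * w 1 = A * w 0 by ring,
      show B * cos θ * w 0 + B * sin θ * w 1 = B * (cos θ * w 0 + sin θ * w 1) by ring,
      m A _ hA0, m B _ hB0]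
    ring
  · field_simp
end

section
/- Let g ∈ ℝ^{n×h} be a fixed matrix with rows g_{1·}, …, g_{n·}, let Φ(t) = 2/(1 + e^{−t}) − 1 be the re-scaled sigmoid, and let W be a random vector in ℝ^h with law the standard Gaussian measure N(0, I_h). For each node p define F_p(W) = Φ(⟨g_{p·}, W⟩), whose gradient in W is ∇F_p(W) = Φ′(⟨g_{p·}, W⟩) g_{p·}. Then for all p, q ∈ {1,…,n}: E_W[⟨∇F_p(W), ∇F_q(W)⟩] = ⟨g_{p·}, g_{q·}⟩ · E[Φ′(u) Φ′(v)], where (u, v) is a random vector in ℝ² with the centered Gaussian law of covariance Δ given by Δ₀₀ = ‖g_{p·}‖², Δ₀₁ = Δ₁₀ = ⟨g_{p·}, g_{q·}⟩, Δ₁₁ = ‖g_{q·}‖². In particular, with g = S X this is the exact (finite-width) neural tangent kernel of the single-layer GCN F_W(X,S) = Φ(S X W), namely Θ = (S X Xᵀ Sᵀ) ⊙ E_{f∼N(0, S X Xᵀ Sᵀ)}[Φ′(f) Φ′(f)ᵀ]. -/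
/-!
The gradient pairing factors pointwise as `⟨g_p, g_q⟩ · Φ′(⟨g_p, W⟩) Φ′(⟨g_q, W⟩)`, so only the joint
law of `(⟨g_p, W⟩, ⟨g_q, W⟩)` matters. This is the image of a standard Gaussian under the
`2 × h` matrix `A` with rows `g_p` and `g_q`, and `A * Aᵀ = Δ = L * Lᵀ`. Characteristic functions
show that the image of a standard Gaussian under a matrix `A` depends only on `A * Aᵀ`
(`map_mulVec_stdGaussian_eq`), so it is the law of `(u, v)`.
-/

open MeasureTheory ProbabilityTheory Matrix

/-- The characteristic function of a standard Gaussian vector, evaluated at the dual vector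
with coordinates `a`. -/
lemma integral_cexp_pi_gaussian {ι : Type*} [Fintype ι] (a : ι → ℝ) :
    ∫ x, Complex.exp ((∑ i, a i * x i : ℝ) * Complex.I)
        ∂(Measure.pi fun _ : ι => gaussianReal 0 1)
      = Complex.exp (-(∑ i, a i ^ 2 : ℝ) / 2) := by
  have key : ∀ x : ι → ℝ, Complex.exp ((∑ i, a i * x i : ℝ) * Complex.I)
      = ∏ i, Complex.exp (a i * x i * Complex.I) := by
    intro x
    rw [← Complex.exp_sum]
    push_cast
    rw [Finset.sum_mul]
  simp_rw [key]
  rw [integral_fintype_prod_eq_prod (fun i (y : ℝ) => Complex.exp (a i * y * Complex.I))]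
  have h1 : ∀ i, ∫ y : ℝ, Complex.exp (a i * y * Complex.I) ∂(gaussianReal 0 1)
      = Complex.exp (-(a i : ℂ) ^ 2 / 2) := by
    intro i
    rw [← charFun_apply_real, charFun_gaussianReal]
    congr 1
    simp
    ring
  simp_rw [h1]
  rw [← Complex.exp_sum]
  congr 1
  push_cast
  rw [← Finset.sum_div, Finset.sum_neg_distrib]

lemma measurable_mulVec_real {m τ : Type*} [Countable m] [Fintype τ] (M : Matrix m τ ℝ) :
    Measurable M.mulVec :=
  (Continuous.matrix_mulVec continuous_const continuous_id).measurable

/-- The image of a standard Gaussian under `M` has, at a dual vector with coordinates `c`, the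
characteristic function `exp (-‖c ᵥ* M‖² / 2)`, where `‖c ᵥ* M‖² = c ⬝ᵥ (M * Mᵀ) *ᵥ c`. -/
lemma charFunDual_map_mulVec_stdGaussian {m τ : Type*} [Fintype m] [DecidableEq m] [Fintype τ]
    (M : Matrix m τ ℝ) (l : StrongDual ℝ (m → ℝ)) :
    charFunDual (Measure.map M.mulVec (Measure.pi fun _ : τ => gaussianReal 0 1)) l
      = Complex.exp (-(((fun k => l (Pi.single k 1)) ⬝ᵥ
          ((M * Mᵀ) *ᵥ fun k => l (Pi.single k 1)) : ℝ) : ℂ) / 2) := by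
  set c : m → ℝ := fun k => l (Pi.single k 1) with hc
  have hl : ∀ y : m → ℝ, l y = c ⬝ᵥ y := by
    intro y
    conv_lhs => rw [pi_eq_sum_univ' y]
    simp [hc, dotProduct, mul_comm]
  rw [charFunDual_apply, integral_map (measurable_mulVec_real M).aemeasurable (by fun_prop)]
  have h1 : ∀ x, l (M *ᵥ x) = ∑ i, (c ᵥ* M) i * x i := by
    intro x
    rw [hl, dotProduct_mulVec, dotProduct]
  simp_rw [h1]
  rw [integral_cexp_pi_gaussian]
  have h2 : ∑ i, (c ᵥ* M) i ^ 2 = c ⬝ᵥ ((M * Mᵀ) *ᵥ c) := by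
    rw [← mulVec_mulVec, dotProduct_mulVec, mulVec_transpose, dotProduct]
    simp_rw [sq]
  rw [h2]

/-- The law of the image of a standard Gaussian under a matrix depends only on the covariance
matrix of that image. -/
lemma map_mulVec_stdGaussian_eq {m ι κ : Type*} [Fintype m] [Fintype ι] [Fintype κ]
    (A : Matrix m ι ℝ) (B : Matrix m κ ℝ) (hAB : A * Aᵀ = B * Bᵀ) :
    Measure.map A.mulVec (Measure.pi fun _ : ι => gaussianReal 0 1)
      = Measure.map B.mulVec (Measure.pi fun _ : κ => gaussianReal 0 1) := by
  classical
  apply Measure.ext_of_charFunDual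
  ext l
  rw [charFunDual_map_mulVec_stdGaussian, charFunDual_map_mulVec_stdGaussian, hAB]

/-- Let `g ∈ ℝ^{n×h}` be fixed, `Φ` the re-scaled sigmoid, and `W ∼ N(0, I_h)`.  With
`F_p(W) = Φ(⟨g_{p·}, W⟩)` and `∇F_p(W) = Φ′(⟨g_{p·}, W⟩) g_{p·}`, for all nodes `p, q`:
`E_W[⟨∇F_p(W), ∇F_q(W)⟩] = ⟨g_{p·}, g_{q·}⟩ · E[Φ′(u)Φ′(v)]`, where `(u,v)` is centered
Gaussian with covariance `Δ₀₀ = ‖g_{p·}‖²`, `Δ₀₁ = Δ₁₀ = ⟨g_{p·}, g_{q·}⟩`,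
`Δ₁₁ = ‖g_{q·}‖²`.  (With `g = SX` this is the exact NTK of the one-layer GCN
`F_W(X,S) = Φ(SXW)`, i.e. `Θ = (SXXᵀSᵀ) ⊙ E[Φ′(f)Φ′(f)ᵀ]` entrywise.) -/
theorem stmt_14 (n h : ℕ) (g : Matrix (Fin n) (Fin h) ℝ)
    (Φ : ℝ → ℝ) (hΦ : ∀ t, Φ t = 2 / (1 + Real.exp (-t)) - 1)
    (μW : Measure (Fin h → ℝ))
    (hμW : μW = Measure.pi (fun _ : Fin h => gaussianReal 0 1))
    (p q : Fin n) (Δ L : Matrix (Fin 2) (Fin 2) ℝ)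
    (hΔ : Δ = !![∑ r, g p r ^ 2, ∑ r, g p r * g q r;
                 ∑ r, g p r * g q r, ∑ r, g q r ^ 2])
    (hL : L * Lᵀ = Δ) (μ₂ : Measure (Fin 2 → ℝ))
    (hμ₂ : μ₂ = Measure.map L.mulVec (Measure.pi fun _ : Fin 2 => gaussianReal 0 1)) :
    ∫ W, ∑ r, (deriv Φ (∑ s, g p s * W s) * g p r)
        * (deriv Φ (∑ s, g q s * W s) * g q r) ∂μW
      = (∑ r, g p r * g q r) * ∫ z, deriv Φ (z 0) * deriv Φ (z 1) ∂μ₂ := by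
  subst hμW hμ₂
  set A : Matrix (Fin 2) (Fin h) ℝ := Matrix.of ![g p, g q] with hA
  have hAA : A * Aᵀ = L * Lᵀ := by
    rw [hL, hΔ]
    ext i j
    fin_cases i <;> fin_cases j <;> simp [hA, Matrix.mul_apply, sq, mul_comm]
  have hpull : ∫ z, deriv Φ (z 0) * deriv Φ (z 1)
        ∂(Measure.map A.mulVec (Measure.pi fun _ : Fin h => gaussianReal 0 1))
      = ∫ W, deriv Φ ((A *ᵥ W) 0) * deriv Φ ((A *ᵥ W) 1)
        ∂(Measure.pi fun _ : Fin h => gaussianReal 0 1) :=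
    integral_map (measurable_mulVec_real A).aemeasurable
      (((measurable_deriv Φ).comp (measurable_pi_apply 0)).mul
        ((measurable_deriv Φ).comp (measurable_pi_apply 1))).aestronglyMeasurable
  rw [← map_mulVec_stdGaussian_eq A L hAA, hpull, ← integral_const_mul]
  congr 1
  ext W
  have h0 : (A *ᵥ W) 0 = ∑ s, g p s * W s := by simp [hA, mulVec, dotProduct]
  have h1 : (A *ᵥ W) 1 = ∑ s, g q s * W s := by simp [hA, mulVec, dotProduct]
  rw [h0, h1, Finset.sum_mul]
  exact Finset.sum_congr rfl fun r _ => by ring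
end
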